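/- Let G = (V ∪ {s}, E) be a finite sandpile graph, let W ⊆ V be nonempty, and let ξ be a generalized minimal configuration on W (so the induced subgraph of G on (V ∪ {s}) \ W is allowed to be disconnected). Then there exists a finite set 𝓔 of edges of G, each incident to a vertex of W, such that ν_G[η ∈ R_G : η_W = ξ] = det( K_G(e,f) )_{e,f ∈ 𝓔}. -/

import Mathlib

open scoped Classical

namespace Sandpile

/-- A finite sandpile multigraph on vertex set `α` (which plays the role of `V ∪ {s}`),
given by a distinguished sink and symmetric edge multiplicities. -/
structure Graph (α : Type*) where
  sink : α
  b : α → α → ℕ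

namespace Graph

variable {α : Type*} [Fintype α] [DecidableEq α] (G : Graph α)

/-- The non-sink vertices (the set `V`). -/
def VSet : Finset α := Finset.univ.erase G.sink

/-- Degree restricted to a finite set of vertices: `deg_F(x) = ∑_{y ∈ F} b_{xy}`. -/
def degIn (F : Finset α) (x : α) : ℕ := ∑ y ∈ F, G.b x y

/-- Total degree `deg_G(x)`. -/
def deg (x : α) : ℕ := ∑ y, G.b x y

/-- `G` is a genuine finite sandpile graph: symmetric multiplicities, no loops, connected. -/
def IsSandpileGraph : Prop :=
  (∀ x y, G.b x y = G.b y x) ∧ (∀ x, G.b x x = 0) ∧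
    ∀ x y : α, Relation.ReflTransGen (fun u v => 0 < G.b u v) x y

/-- Connectivity of the subgraph induced on the vertex set `S`. -/
def ConnectedOn (S : Set α) : Prop :=
  ∀ x ∈ S, ∀ y ∈ S,
    Relation.ReflTransGen (fun u v => u ∈ S ∧ v ∈ S ∧ 0 < G.b u v) x y

/-- A sandpile is stable if every non-sink vertex carries fewer particles than its degree. -/
def Stable (η : α → ℕ) : Prop := ∀ x ∈ G.VSet, η x < G.deg x

/-- `η` is ample for `F` if some vertex of `F` has at least `deg_F` particles. -/
def AmpleFor (η : α → ℕ) (F : Finset α) : Prop := ∃ x ∈ F, G.degIn F x ≤ η x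

/-- Dhar's burning test: recurrent = stable and ample for every nonempty `F ⊆ V`. -/
def Recurrent (η : α → ℕ) : Prop :=
  G.Stable η ∧ ∀ F ⊆ G.VSet, F.Nonempty → G.AmpleFor η F

/-- Remove one particle at `w` (`η - δ_w`). -/
def SubOne (η : α → ℕ) (w : α) : α → ℕ := fun x => if x = w then η x - 1 else η x

/-- `η` and `ξ` agree on `W` (restriction `η_W = ξ_W`). -/
def EqOn (η ξ : α → ℕ) (W : Finset α) : Prop := ∀ x ∈ W, η x = ξ x

/-- `ξ` is (generalized) minimal on `W`: it extends to a recurrent sandpile, and no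
recurrent extension stays recurrent after removing a particle from a vertex of `W`.
(`η - δ_w ∉ R_G` holds automatically if `η w = 0`, as then `η - δ_w` is not a configuration.) -/
def Minimal (W : Finset α) (ξ : α → ℕ) : Prop :=
  (∃ η, G.Recurrent η ∧ EqOn η ξ W) ∧
    ∀ η, G.Recurrent η → EqOn η ξ W → ∀ w ∈ W, ¬(1 ≤ η w ∧ G.Recurrent (SubOne η w))

/-- `ν_G[P]`: the uniform probability of the event `P` under the uniform measure on
recurrent configurations (configurations are normalized to vanish at the sink). -/
noncomputable def prob (P : (α → ℕ) → Prop) : ℝ :=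
  (Nat.card {η : α → ℕ // η G.sink = 0 ∧ G.Recurrent η ∧ P η} : ℝ) /
    (Nat.card {η : α → ℕ // η G.sink = 0 ∧ G.Recurrent η} : ℝ)

/-- The graph Laplacian with the sink row and column deleted. -/
noncomputable def lapRed :
    Matrix {x : α // x ≠ G.sink} {x : α // x ≠ G.sink} ℝ :=
  Matrix.of fun x y =>
    if (x : α) = (y : α) then (G.deg ↑x : ℝ) else -(G.b ↑x ↑y : ℝ)

/-- `H = (Δ')⁻¹`, extended by `0` on the sink. -/
noncomputable def Hfun (x y : α) : ℝ :=
  if hx : x = G.sink then 0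
  else if hy : y = G.sink then 0
  else (G.lapRed)⁻¹ ⟨x, hx⟩ ⟨y, hy⟩

/-- Oriented edges of the multigraph `G`: an edge from `p.1` to `p.2.1`, with copy
index `p.2.2` (parallel edges are distinct). -/
abbrev OEdge (G : Graph α) : Type _ := {p : α × α × ℕ // p.2.2 < G.b p.1 p.2.1}

/-- `K_G(e,f) = δ_{ef} - Y_G(e,f)` where `Y_G` is the transfer current matrix. -/
noncomputable def Kmat (e f : G.OEdge) : ℝ :=
  (if e = f then 1 else 0) -
    (G.Hfun e.1.1 f.1.1 - G.Hfun e.1.1 f.1.2.1 - G.Hfun e.1.2.1 f.1.1 +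
      G.Hfun e.1.2.1 f.1.2.1)

/-- Unburnt sets of phase one of the burning algorithm based on `Q`:
`U_0 = V`, `U_i = U_{i-1} \ B_i` with `B_i = {x ∈ U_{i-1} \ Q : η x ≥ deg_{U_{i-1}} x}`. -/
def U1 (η : α → ℕ) (Q : Finset α) : ℕ → Finset α
  | 0 => G.VSet
  | i + 1 => (U1 η Q i).filter fun x => x ∈ Q ∨ η x < G.degIn (U1 η Q i) x

/-- The final unburnt set `U^{(1)}_I` of phase one (the sequence `U1` is decreasing,
hence stabilizes after at most `|α|` steps). -/
def U1lim (η : α → ℕ) (Q : Finset α) : Finset α := G.U1 η Q (Fintype.card α)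

/-- Unburnt sets of phase two of the burning algorithm based on `Q`. -/
def U2 (η : α → ℕ) (Q : Finset α) : ℕ → Finset α
  | 0 => G.U1lim η Q
  | i + 1 => (U2 η Q i).filter fun x => η x < G.degIn (U2 η Q i) x

/-- Recurrence in the wired graph `G_W` (note `deg_{G_W}(x) = deg_G(x)` for `x ∈ W`,
and `deg_F` for `F ⊆ W` is the same in `G_W` and `G`). -/
def WiredRecurrent (W : Finset α) (ξ : α → ℕ) : Prop :=
  (∀ x ∈ W, ξ x < G.deg x) ∧ ∀ F ⊆ W, F.Nonempty → ∃ x ∈ F, G.degIn F x ≤ ξ x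

/-- `ξ` is minimal in the wired graph `G_W`. -/
def WiredMinimal (W : Finset α) (ξ : α → ℕ) : Prop :=
  G.WiredRecurrent W ξ ∧ ∀ w ∈ W, ¬(1 ≤ ξ w ∧ G.WiredRecurrent W (SubOne ξ w))

/-- Entry points `E(ξ,W)` of `ξ ∈ R_{G_W}`: vertices burnable at the first step. -/
def entryPoints (W : Finset α) (ξ : α → ℕ) : Finset α :=
  W.filter fun w => G.degIn W w ≤ ξ w

/-- `x` is burnable given the burnt set `S`: `η(x) ≥ deg_G(x) − ∑_{y ∈ S} b_{xy}`. -/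
def Burnable (η : α → ℕ) (S : Finset α) (x : α) : Prop :=
  G.degIn (Finset.univ \ S) x ≤ η x

/-- A burning sequence starting from the burnt set `S`. -/
def IsBurnSeq (η : α → ℕ) : Finset α → List α → Prop
  | _, [] => True
  | S, x :: l => x ∉ S ∧ G.Burnable η S x ∧ IsBurnSeq η (insert x S) l

/-- `B` is a burnt set for `η`: some burning sequence from `{s}` burns exactly `B`. -/
def IsBurntSet (η : α → ℕ) (B : Finset α) : Prop :=
  ∃ l : List α, G.IsBurnSeq η {G.sink} l ∧ l.toFinset = B

/-- Reachability within the vertex set `S`. -/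
def ReachIn (S : Set α) (x y : α) : Prop :=
  Relation.ReflTransGen (fun u v => u ∈ S ∧ v ∈ S ∧ 0 < G.b u v) x y

/-- `C` is a connected component of the subgraph induced on `(V ∪ {s}) \ W`
that does not contain the sink. -/
def IsHoleComp (W C : Finset α) : Prop :=
  C.Nonempty ∧ G.sink ∉ C ∧
    ∀ x ∈ C, ∀ y : α, y ∈ C ↔ y ∉ W ∧ G.ReachIn {a : α | a ∉ W} x y

/-- Adjacency induced by a finite set `t` of (undirected, indexed) edges. -/
def edgeRel (t : Finset (Sym2 α × ℕ)) (u v : α) : Prop := ∃ k : ℕ, (s(u, v), k) ∈ t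

/-- `t` is a spanning tree of the multigraph `G`: it consists of edges of `G`
(parallel edges distinct), it spans (connected), and every edge is a bridge
(equivalently, it is acyclic). -/
def IsSpanningTree (t : Finset (Sym2 α × ℕ)) : Prop :=
  (∀ p ∈ t, ∃ x y : α, p.1 = s(x, y) ∧ p.2 < G.b x y) ∧
  (∀ u v : α, Relation.ReflTransGen (edgeRel t) u v) ∧
  ∀ p ∈ t, ∀ x y : α, p.1 = s(x, y) →
    ¬ Relation.ReflTransGen (edgeRel (t.erase p)) x y

/-- Adjacency induced by a set of (undirected, indexed) edges. -/
def edgeRelSet (t : Set (Sym2 α × ℕ)) (u v : α) : Prop := ∃ k : ℕ, (s(u, v), k) ∈ t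

/-- Set version of `IsSpanningTree`. -/
def IsSpanningTreeSet (t : Set (Sym2 α × ℕ)) : Prop :=
  (∀ p ∈ t, ∃ x y : α, p.1 = s(x, y) ∧ p.2 < G.b x y) ∧
  (∀ u v : α, Relation.ReflTransGen (edgeRelSet t) u v) ∧
  ∀ p ∈ t, ∀ x y : α, p.1 = s(x, y) →
    ¬ Relation.ReflTransGen (edgeRelSet (t \ {p})) x y

/-- The step at which `x` burns in phase one (0 for the sink; `sInf ∅ = 0` if `x`
never burns in phase one). -/
noncomputable def p1time (η : α → ℕ) (Q : Finset α) (x : α) : ℕ :=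
  sInf {i : ℕ | x ∉ G.U1 η Q i}

/-- The step at which `x` burns in phase two. -/
noncomputable def p2time (η : α → ℕ) (Q : Finset α) (x : α) : ℕ :=
  sInf {i : ℕ | x ∉ G.U2 η Q i}

/-- Vertices burnt at step `i` of phase one (`B^{(1)}_0 = {s}`). -/
def B1 (η : α → ℕ) (Q : Finset α) : ℕ → Finset α
  | 0 => {G.sink}
  | i + 1 => G.U1 η Q i \ G.U1 η Q (i + 1)

/-- Vertices burnt at step `i` of phase two (`B^{(2)}_0` = everything burnt in phase
one, including the sink). -/
def B2 (η : α → ℕ) (Q : Finset α) : ℕ → Finset α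
  | 0 => Finset.univ \ G.U1lim η Q
  | i + 1 => G.U2 η Q i \ G.U2 η Q (i + 1)

/-- The set `B^{(p)}_{i-1}` of vertices burnt at the step preceding the step at which
`x` burns (in the appropriate phase). -/
noncomputable def prevBurnt (η : α → ℕ) (Q : Finset α) (x : α) : Finset α :=
  if x ∈ G.U1lim η Q then G.B2 η Q (G.p2time η Q x - 1)
  else G.B1 η Q (G.p1time η Q x - 1)

/-- The set `D = B^{(p)}_0 ∪ ⋯ ∪ B^{(p)}_{i-1}` of vertices burnt strictly before `x`
in the phase in which `x` burns. -/
noncomputable def burntBefore (η : α → ℕ) (Q : Finset α) (x : α) : Finset α :=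
  if x ∈ G.U1lim η Q then Finset.univ \ G.U2 η Q (G.p2time η Q x - 1)
  else Finset.univ \ G.U1 η Q (G.p1time η Q x - 1)

/-- `j = η(x) − deg_G(x) + n_x` with `n_x = ∑_{y ∈ D} b_{xy}`. -/
noncomputable def jX (η : α → ℕ) (Q : Finset α) (x : α) : ℕ :=
  η x + G.degIn (G.burntBefore η Q x) x - G.deg x

/-- The defining property of the edge `e_x` of the burning bijection based on `Q`:
`e_x` has tail `x`, head burnt at the previous step, and exactly `j` smaller elements
of `P_x` under the given edge order `lt x`. -/
def EdgeSpec (lt : α → G.OEdge → G.OEdge → Prop) (η : α → ℕ) (Q : Finset α)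
    (x : α) (e : G.OEdge) : Prop :=
  e.1.1 = x ∧ e.1.2.1 ∈ G.prevBurnt η Q x ∧
    {f : G.OEdge | f.1.1 = x ∧ f.1.2.1 ∈ G.prevBurnt η Q x ∧ lt x f e}.ncard =
      G.jX η Q x

/-- The (oriented) spanning tree `t(η) = {e_x : x ∈ V}` assigned to `η` by the
burning bijection based on `Q`. -/
def treeOf (lt : α → G.OEdge → G.OEdge → Prop) (η : α → ℕ) (Q : Finset α) :
    Set G.OEdge :=
  {e | ∃ x ∈ G.VSet, G.EdgeSpec lt η Q x e}

/-- Forget the orientation of an oriented edge. -/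
def undir (e : G.OEdge) : Sym2 α × ℕ := (s(e.1.1, e.1.2.1), e.1.2.2)

/-- Total burning order: phase-one vertices first (at their phase-one step), then
phase-two vertices. -/
noncomputable def burnOrder (η : α → ℕ) (Q : Finset α) (x : α) : ℕ :=
  if x ∈ G.U1lim η Q then Fintype.card α + 1 + G.p2time η Q x else G.p1time η Q x

/-- Edge multiplicities of the auxiliary graph `G_W^*` (on vertex set `W ∪ {s}`):
`b*_{xy} = b_{xy}` for `x,y ∈ W`; `b*_{xs} = ∑_{z ∉ W} b_{xz}` for `x ∈ Q` and
`b*_{xs} = 0` for `x ∈ W \ Q`. -/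
def bstar (Q W : Finset α) (x y : α) : ℕ :=
  if x ∈ W ∧ y ∈ W then G.b x y
  else if x ∈ W ∧ y = G.sink then
    if x ∈ Q then ∑ z ∈ Finset.univ \ W, G.b x z else 0
  else if y ∈ W ∧ x = G.sink then
    if y ∈ Q then ∑ z ∈ Finset.univ \ W, G.b z y else 0
  else 0

/-- Recurrence in the auxiliary graph `G_W^*`. -/
def StarRecurrent (Q W : Finset α) (ζ : α → ℕ) : Prop :=
  (∀ x ∈ W, ζ x < ∑ y ∈ insert G.sink W, G.bstar Q W x y) ∧
    ∀ F ⊆ W, F.Nonempty → ∃ x ∈ F, (∑ y ∈ F, G.bstar Q W x y) ≤ ζ x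

end Graph

end Sandpile

open Sandpile

/-!
A minimal configuration `ξ` on `W` fixes the order of burning around `W`. Indeed, if `w ∈ W` and
`B` is the set of vertices that cannot burn before `w` in the maximal extension of `ξ`, then
minimality forces `ξ w = deg_B w`: in every recurrent extension `w` burns only once all its
neighbours outside `B` have burnt. Each `w ∈ W` then keeps a single edge to one neighbour burning
before it, and the other edges to neighbours burning before it are cut. A component of the
complement of `W`, connected to the sink or not, keeps besides its inner edges only edges of the
resulting tree. In the cut graph, `w` burns exactly when the fire arrives along its one remaining
edge to the outside of its branch, so a recurrent configuration takes its largest stable value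
at `w`; removing as many particles outside `W` as edges were cut there is thus a bijection from the
recurrent extensions of `ξ` to all the recurrent configurations of the cut graph.

Recurrent configurations are counted by the determinant of the reduced Laplacian: they represent
each class of the sandpile group once. Deleting a set of edges changes the reduced Laplacian by a
matrix of low rank, so the quotient of the two determinants is `det K` by the matrix determinant
lemma.
-/

namespace Sandpile

lemma natCard_quotient_range_mulVecLin {n : Type*} [Fintype n] [DecidableEq n]
    (A : Matrix n n ℤ) (hA : A.det ≠ 0) :
    Nat.card ((n → ℤ) ⧸ LinearMap.range A.mulVecLin) = A.det.natAbs := by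
  rw [← Submodule.natAbs_det_equiv _
    (LinearEquiv.ofInjective A.mulVecLin (Matrix.mulVec_injective_of_det_ne_zero hA)),
    ← LinearMap.det_toLin']
  rfl

namespace Graph

section Laplacian

variable {α : Type*} [Fintype α] (G : Graph α)

/-- The Laplacian of `G`, acting on functions on all vertices, the sink included. -/
def laplacian {R : Type*} [CommRing R] (f : α → R) (x : α) : R :=
  ∑ y, (G.b x y : R) * (f x - f y)

variable {G}

section Ring

variable {R : Type*} [CommRing R]

lemma laplacian_add (f g : α → R) (x : α) :
    G.laplacian (f + g) x = G.laplacian f x + G.laplacian g x := by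
  simp only [laplacian, ← Finset.sum_add_distrib]
  exact Finset.sum_congr rfl fun y _ => by simp only [Pi.add_apply]; ring

lemma laplacian_smul (c : R) (f : α → R) (x : α) :
    G.laplacian (c • f) x = c * G.laplacian f x := by
  simp only [laplacian, Finset.mul_sum]
  exact Finset.sum_congr rfl fun y _ => by simp only [Pi.smul_apply, smul_eq_mul]; ring

lemma sum_mul_laplacian_comm (hsymm : ∀ x y, G.b x y = G.b y x) (f g : α → R) :
    ∑ x, f x * G.laplacian g x = ∑ x, g x * G.laplacian f x := by
  have hswap : ∑ x, ∑ y, (G.b x y : R) * (f x * g y) = ∑ x, ∑ y, (G.b x y : R) * (g x * f y) := by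
    rw [Finset.sum_comm]
    exact Finset.sum_congr rfl fun x _ => Finset.sum_congr rfl fun y _ => by rw [hsymm]; ring
  rw [← sub_eq_zero, ← sub_eq_zero.2 hswap.symm]
  simp only [laplacian, Finset.mul_sum, ← Finset.sum_sub_distrib]
  exact Finset.sum_congr rfl fun x _ => Finset.sum_congr rfl fun y _ => by ring

lemma two_mul_sum_mul_laplacian_self (hsymm : ∀ x y, G.b x y = G.b y x) (f : α → R) :
    2 * ∑ x, f x * G.laplacian f x = ∑ x, ∑ y, (G.b x y : R) * (f x - f y) ^ 2 := by
  have hswap : ∑ x, f x * G.laplacian f x = ∑ x, ∑ y, (G.b x y : R) * (f y * (f y - f x)) := by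
    simp only [laplacian, Finset.mul_sum]
    rw [Finset.sum_comm]
    exact Finset.sum_congr rfl fun x _ => Finset.sum_congr rfl fun y _ => by rw [hsymm]; ring
  rw [two_mul]
  nth_rewrite 1 [hswap]
  simp only [laplacian, Finset.mul_sum, ← Finset.sum_add_distrib]
  exact Finset.sum_congr rfl fun x _ => Finset.sum_congr rfl fun y _ => by ring

lemma laplacian_indicator_of_mem {F : Finset α} {x : α} (hx : x ∈ F) :
    G.laplacian ((F : Set α).indicator (1 : α → R)) x = G.deg x - G.degIn F x := by
  simp [laplacian, mul_sub, Finset.sum_sub_distrib, Set.indicator_apply, hx, deg, degIn]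

end Ring

section OrderedRing

variable {R : Type*} [CommRing R] [LinearOrder R] [IsStrictOrderedRing R]

lemma laplacian_indicator_nonpos_of_notMem {F : Finset α} {x : α} (hx : x ∉ F) :
    G.laplacian ((F : Set α).indicator (1 : α → R)) x ≤ 0 := by
  refine Finset.sum_nonpos fun y _ => mul_nonpos_of_nonneg_of_nonpos (Nat.cast_nonneg _) ?_
  rw [Set.indicator_of_notMem (Finset.mem_coe.not.2 hx), zero_sub, neg_nonpos]
  exact Set.indicator_nonneg (fun _ _ => zero_le_one) y

lemma laplacian_nonpos_of_forall_le {f : α → R} {x : α} (hx : ∀ y, f x ≤ f y) :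
    G.laplacian f x ≤ 0 :=
  Finset.sum_nonpos fun y _ =>
    mul_nonpos_of_nonneg_of_nonpos (Nat.cast_nonneg _) (sub_nonpos.2 (hx y))

lemma nonneg_of_laplacian_pos {f : α → R} (hsink : f G.sink = 0)
    (hf : ∀ x ≠ G.sink, 0 < G.laplacian f x) (x : α) : 0 ≤ f x := by
  obtain ⟨m, -, hm⟩ := Finset.exists_min_image Finset.univ f ⟨x, Finset.mem_univ x⟩
  have hm_sink : m = G.sink := by
    by_contra hne
    exact (hf m hne).not_ge (laplacian_nonpos_of_forall_le fun y => hm y (Finset.mem_univ y))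
  simpa [← hsink, ← hm_sink] using hm x (Finset.mem_univ x)

end OrderedRing

lemma eq_of_sum_sum_mul_sq_eq_zero (hconn : ∀ x y, Relation.ReflTransGen (0 < G.b · ·) x y)
    {f : α → ℝ} (hf : ∑ x, ∑ y, (G.b x y : ℝ) * (f x - f y) ^ 2 = 0) (x y : α) : f x = f y := by
  have hterm (x y : α) : 0 ≤ (G.b x y : ℝ) * (f x - f y) ^ 2 := by positivity
  have hadj {x y : α} (hxy : 0 < G.b x y) : f x = f y := by
    rw [Fintype.sum_eq_zero_iff_of_nonneg fun x => Finset.sum_nonneg fun y _ => hterm x y] at hf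
    have hzero := congrFun ((Fintype.sum_eq_zero_iff_of_nonneg (hterm x)).1 (congrFun hf x)) y
    simpa [hxy.ne', sub_eq_zero] using hzero
  induction hconn x y with
  | refl => rfl
  | tail _ hxy ih => exact ih.trans (hadj hxy)

end Laplacian

section ReducedLaplacian

variable {α : Type*} {R : Type*} [CommRing R] {G : Graph α}

/-- Extension of a function on the non-sink vertices by zero at the sink. -/
noncomputable def extendZero (v : {x : α // x ≠ G.sink} → R) : α → R :=
  Function.extend Subtype.val v 0

@[simp]
lemma extendZero_coe (v : {x : α // x ≠ G.sink} → R) (x : {x : α // x ≠ G.sink}) :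
    extendZero v x = v x :=
  Subtype.val_injective.extend_apply v 0 x

@[simp]
lemma extendZero_sink (v : {x : α // x ≠ G.sink} → R) : extendZero v G.sink = 0 :=
  Function.extend_apply' _ _ _ fun ⟨x, hx⟩ => x.2 hx

lemma extendZero_restrict {f : α → R} (hf : f G.sink = 0) :
    extendZero (fun x : {x : α // x ≠ G.sink} => f x) = f := by
  funext x
  by_cases hx : x = G.sink
  · rw [hx, hf, extendZero_sink]
  · exact extendZero_coe _ ⟨x, hx⟩

variable [Fintype α] [DecidableEq α]

lemma sum_subtype_ne_sink {f : α → R} (hf : f G.sink = 0) :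
    ∑ x : {x : α // x ≠ G.sink}, f x = ∑ x, f x := by
  rw [Fintype.sum_eq_add_sum_subtype_ne f G.sink, hf, zero_add]

variable (G R) in
/-- The matrix `lapRed` over an arbitrary commutative ring; the counting argument needs it
over `ℤ`. -/
def reducedLaplacian : Matrix {x : α // x ≠ G.sink} {x : α // x ≠ G.sink} R :=
  Matrix.of fun x y => if (x : α) = y then (G.deg x : R) else -(G.b x y : R)

lemma reducedLaplacian_mulVec (hloop : ∀ x, G.b x x = 0) (v : {x : α // x ≠ G.sink} → R)
    (x : {x : α // x ≠ G.sink}) :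
    (G.reducedLaplacian R).mulVec v x = G.laplacian (extendZero v) x := by
  have hentry (y : {x : α // x ≠ G.sink}) :
      G.reducedLaplacian R x y * v y
        = (if x = y then (G.deg x : R) * v y else 0) - (G.b x y : R) * extendZero v y := by
    rcases eq_or_ne x y with rfl | hxy
    · simp [reducedLaplacian, hloop]
    · simp [reducedLaplacian, hxy, Subtype.coe_ne_coe.2 hxy]
  simp only [Matrix.mulVec, dotProduct, hentry, Finset.sum_sub_distrib, Finset.sum_ite_eq,
    Finset.mem_univ, if_true]
  rw [sum_subtype_ne_sink (f := fun y => (G.b x y : R) * extendZero v y) (by simp)]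
  simp [laplacian, mul_sub, Finset.sum_sub_distrib, ← Finset.sum_mul, deg]

lemma lapRed_det_eq_intCast : G.lapRed.det = ((G.reducedLaplacian ℤ).det : ℝ) := by
  rw [Int.cast_det]
  congr 1
  ext x y
  simp only [reducedLaplacian, lapRed, Matrix.map_apply, Matrix.of_apply]
  split_ifs <;> simp

theorem lapRed_posDef (hG : G.IsSandpileGraph) : G.lapRed.PosDef := by
  obtain ⟨hsymm, hloop, hconn⟩ := hG
  refine Matrix.PosDef.of_dotProduct_mulVec_pos ?_ fun v hv => ?_
  · ext x y
    simp only [Matrix.conjTranspose_apply, lapRed, Matrix.of_apply, star_trivial,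
      eq_comm (a := (y : α)), hsymm y x]
    split_ifs with hxy <;> simp [hxy]
  · have hform : star v ⬝ᵥ G.lapRed.mulVec v
        = ∑ x, extendZero v x * G.laplacian (extendZero v) x := by
      rw [← sum_subtype_ne_sink (G := G) (by simp)]
      exact Finset.sum_congr rfl fun x _ => by
        rw [extendZero_coe, ← reducedLaplacian_mulVec hloop]; rfl
    have henergy := two_mul_sum_mul_laplacian_self hsymm (extendZero v)
    have henergy_nonneg :
        0 ≤ ∑ x, ∑ y, (G.b x y : ℝ) * (extendZero v x - extendZero v y) ^ 2 := by positivity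
    rw [hform]
    refine lt_of_le_of_ne (by linarith) fun hzero => hv ?_
    rw [← hzero, mul_zero] at henergy
    funext x
    simpa using eq_of_sum_sum_mul_sq_eq_zero hconn henergy.symm x G.sink

lemma det_lapRed_pos (hG : G.IsSandpileGraph) : 0 < G.lapRed.det :=
  (lapRed_posDef hG).det_pos

lemma det_reducedLaplacian_int_pos (hG : G.IsSandpileGraph) : 0 < (G.reducedLaplacian ℤ).det := by
  exact_mod_cast lapRed_det_eq_intCast (G := G) ▸ det_lapRed_pos hG

end ReducedLaplacian

section Counting

variable {α : Type*} [Fintype α] [DecidableEq α] {G : Graph α}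

@[simp]
lemma mem_VSet {x : α} : x ∈ G.VSet ↔ x ≠ G.sink := by simp [VSet]

lemma sink_notMem_of_subset_VSet {F : Finset α} (hF : F ⊆ G.VSet) : G.sink ∉ F :=
  fun h => mem_VSet.1 (hF h) rfl

lemma Recurrent.firing_nonpos {η η' : α → ℕ} (hη : G.Stable η) (hη' : G.Recurrent η')
    {k : α → ℤ} (hsink : k G.sink = 0)
    (hfire : ∀ x ≠ G.sink, (η' x : ℤ) = η x - G.laplacian k x) (x : α) : k x ≤ 0 := by
  by_contra! hx
  obtain ⟨m, -, hm⟩ := Finset.exists_max_image Finset.univ k ⟨x, Finset.mem_univ x⟩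
  have hm_pos : 0 < k m := hx.trans_le (hm x (Finset.mem_univ x))
  set F := Finset.univ.filter fun y => k y = k m with hF
  have hF_sub : F ⊆ G.VSet := fun y hy => mem_VSet.2 <| by
    rintro rfl
    have : k G.sink = k m := (Finset.mem_filter.1 hy).2
    omega
  obtain ⟨z, hz, hz_ample⟩ := hη'.2 F hF_sub ⟨m, by simp [hF]⟩
  have hz_max : k z = k m := (Finset.mem_filter.1 hz).2
  have hcompare : G.laplacian ((F : Set α).indicator (1 : α → ℤ)) z ≤ G.laplacian k z := by
    refine Finset.sum_le_sum fun y _ => mul_le_mul_of_nonneg_left ?_ (Nat.cast_nonneg _)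
    have hy_le : k y ≤ k m := hm y (Finset.mem_univ y)
    by_cases hy : k y = k m
    · simp [hF, hz_max, hy]
    · simp only [Set.indicator_apply, hF, Finset.coe_filter, Finset.mem_univ, true_and,
        Set.mem_ofPred_eq, hz_max, hy, if_true, if_false, Pi.one_apply]
      omega
  rw [laplacian_indicator_of_mem hz] at hcompare
  have hz_stable := hη z (hF_sub hz)
  have hz_fire := hfire z (mem_VSet.1 (hF_sub hz))
  omega

lemma Recurrent.eq_of_sub_eq_laplacian {η η' : α → ℕ} (hη : G.Recurrent η)
    (hη' : G.Recurrent η') {k : α → ℤ} (hsink : k G.sink = 0)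
    (hfire : ∀ x ≠ G.sink, (η x : ℤ) - η' x = G.laplacian k x) {x : α} (hx : x ≠ G.sink) :
    η x = η' x := by
  have hneg (y : α) : G.laplacian ((-1 : ℤ) • k) y = -1 * G.laplacian k y := laplacian_smul _ _ _
  have hk_le := hη'.firing_nonpos hη.1 hsink fun y hy => by linarith [hfire y hy]
  have hk_ge := hη.firing_nonpos hη'.1 (k := (-1 : ℤ) • k) (by simp [hsink])
    fun y hy => by linarith [hfire y hy, hneg y]
  have hk : k = 0 := by
    funext y
    have := hk_le y
    have := hk_ge y
    simp only [Pi.smul_apply, smul_eq_mul, Pi.zero_apply] at *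
    omega
  have := hfire x hx
  simp only [hk, laplacian, Pi.zero_apply, sub_zero, mul_zero, Finset.sum_const_zero] at this
  omega

omit [DecidableEq α] in
lemma exists_potential (hG : G.IsSandpileGraph) :
    ∃ (g : α → ℤ) (d : ℤ), 0 < d ∧ g G.sink = 0 ∧ (∀ x, 0 ≤ g x) ∧
      ∀ x ≠ G.sink, G.laplacian g x = d := by
  set A := G.reducedLaplacian ℤ
  have hdet : 0 < A.det := det_reducedLaplacian_int_pos hG
  have hlap (x : α) (hx : x ≠ G.sink) :
      G.laplacian (extendZero (A.adjugate.mulVec 1)) x = A.det := by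
    rw [← reducedLaplacian_mulVec hG.2.1 _ ⟨x, hx⟩, Matrix.mulVec_mulVec, Matrix.mul_adjugate,
      Matrix.smul_mulVec, Matrix.one_mulVec]
    simp [A]
  exact ⟨extendZero (A.adjugate.mulVec 1), A.det, hdet, extendZero_sink _,
    nonneg_of_laplacian_pos (extendZero_sink _) fun x hx => (hlap x hx).symm ▸ hdet, hlap⟩

variable (G) in
/-- The configuration `σ` becomes stable after firing each vertex `x` exactly `-k x` times,
the sink never firing. -/
def IsStabilizing (σ k : α → ℤ) : Prop :=
  k G.sink = 0 ∧ ∀ x ≠ G.sink, σ x + G.laplacian k x < G.deg x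

omit [DecidableEq α] in
lemma exists_isStabilizing (hG : G.IsSandpileGraph) (σ : α → ℤ) : ∃ k, G.IsStabilizing σ k := by
  obtain ⟨g, d, hd, hg_sink, -, hg⟩ := exists_potential hG
  set N := ∑ x, |σ x| + 1
  refine ⟨(-N) • g, by simp [hg_sink], fun x hx => ?_⟩
  have hσ : |σ x| ≤ ∑ x, |σ x| :=
    Finset.single_le_sum (f := fun x => |σ x|) (fun y _ => abs_nonneg _) (Finset.mem_univ x)
  have hN : σ x < N := by linarith [le_abs_self (σ x)]
  have hN_nonneg : 0 ≤ N := by positivity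
  rw [laplacian_smul, hg x hx]
  nlinarith [(Nat.cast_nonneg (G.deg x) : (0 : ℤ) ≤ _)]

omit [DecidableEq α] in
lemma bddAbove_sum_isStabilizing (hG : G.IsSandpileGraph) (σ : α → ℤ) :
    ∃ B, ∀ k, G.IsStabilizing σ k → ∑ x, k x ≤ B := by
  obtain ⟨g, d, hd, hg_sink, hg_nonneg, hg⟩ := exists_potential hG
  refine ⟨(∑ x, g x * (G.deg x - σ x)) / d, fun k ⟨hk_sink, hk⟩ => ?_⟩
  refine Int.le_ediv_of_mul_le hd ?_
  calc (∑ x, k x) * d = ∑ x, k x * G.laplacian g x := by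
        rw [Finset.sum_mul]
        refine Finset.sum_congr rfl fun x _ => ?_
        by_cases hx : x = G.sink
        · simp [hx, hk_sink]
        · rw [hg x hx]
    _ = ∑ x, g x * G.laplacian k x := sum_mul_laplacian_comm hG.1 k g
    _ ≤ ∑ x, g x * (G.deg x - σ x) := by
        refine Finset.sum_le_sum fun x _ => ?_
        by_cases hx : x = G.sink
        · simp [hx, hg_sink]
        · exact mul_le_mul_of_nonneg_left (by linarith [hk x hx]) (hg_nonneg x)

omit [DecidableEq α] in
lemma exists_maximal_isStabilizing (hG : G.IsSandpileGraph) (σ : α → ℤ) :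
    ∃ k, G.IsStabilizing σ k ∧ ∀ k', G.IsStabilizing σ k' → ∑ x, k' x ≤ ∑ x, k x := by
  obtain ⟨B, hB⟩ := bddAbove_sum_isStabilizing hG σ
  obtain ⟨k₀, hk₀⟩ := exists_isStabilizing hG σ
  obtain ⟨_, ⟨k, hk, rfl⟩, hmax⟩ :=
    Int.exists_greatest_of_bdd (P := fun z => ∃ k, G.IsStabilizing σ k ∧ ∑ x, k x = z)
      ⟨B, by rintro _ ⟨k, hk, rfl⟩; exact hB k hk⟩ ⟨_, k₀, hk₀, rfl⟩
  exact ⟨k, hk, fun k' hk' => hmax _ ⟨k', hk', rfl⟩⟩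

lemma IsStabilizing.add_indicator {σ k : α → ℤ} (hk : G.IsStabilizing σ k) {F : Finset α}
    (hF : F ⊆ G.VSet) (hstuck : ∀ x ∈ F, σ x + G.laplacian k x < G.degIn F x) :
    G.IsStabilizing σ (k + (F : Set α).indicator 1) := by
  refine ⟨by simp [hk.1, sink_notMem_of_subset_VSet hF], fun x hx => ?_⟩
  rw [laplacian_add]
  by_cases hxF : x ∈ F
  · rw [laplacian_indicator_of_mem hxF]
    linarith [hstuck x hxF]
  · linarith [hk.2 x hx, laplacian_indicator_nonpos_of_notMem (G := G) (R := ℤ) hxF]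

lemma IsStabilizing.ample_of_maximal {σ k : α → ℤ} (hk : G.IsStabilizing σ k)
    (hmax : ∀ k', G.IsStabilizing σ k' → ∑ x, k' x ≤ ∑ x, k x) {F : Finset α} (hF : F ⊆ G.VSet)
    (hne : F.Nonempty) : ∃ x ∈ F, (G.degIn F x : ℤ) ≤ σ x + G.laplacian k x := by
  by_contra! hstuck
  have hle := hmax _ (hk.add_indicator hF hstuck)
  have hcard : ∑ x, (F : Set α).indicator (1 : α → ℤ) x = F.card := by
    simp [Set.indicator_apply]
  simp only [Pi.add_apply, Finset.sum_add_distrib, hcard] at hle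
  have := hne.card_pos
  omega

lemma exists_recurrent_eq_add_laplacian (hG : G.IsSandpileGraph) (σ : α → ℤ) :
    ∃ (η : α → ℕ) (k : α → ℤ), η G.sink = 0 ∧ G.Recurrent η ∧ k G.sink = 0 ∧
      ∀ x ≠ G.sink, (η x : ℤ) = σ x + G.laplacian k x := by
  obtain ⟨k, hk, hmax⟩ := exists_maximal_isStabilizing hG σ
  have hnonneg (x : α) (hx : x ≠ G.sink) : 0 ≤ σ x + G.laplacian k x := by
    obtain ⟨y, hy, hy_ample⟩ :=
      hk.ample_of_maximal hmax (F := {x}) (by simpa using hx) (Finset.singleton_nonempty x)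
    rw [Finset.mem_singleton] at hy
    exact (Nat.cast_nonneg _).trans (hy ▸ hy_ample)
  let η (x : α) : ℕ := if x = G.sink then 0 else (σ x + G.laplacian k x).toNat
  have hη (x : α) (hx : x ≠ G.sink) : (η x : ℤ) = σ x + G.laplacian k x := by
    simp only [η, if_neg hx, Int.toNat_of_nonneg (hnonneg x hx)]
  refine ⟨η, k, if_pos rfl, ⟨fun x hx => ?_, fun F hF hne => ?_⟩, hk.1, hη⟩
  · exact_mod_cast hη x (mem_VSet.1 hx) ▸ hk.2 x (mem_VSet.1 hx)
  · obtain ⟨x, hxF, hx⟩ := hk.ample_of_maximal hmax hF hne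
    exact ⟨x, hxF, by exact_mod_cast hη x (mem_VSet.1 (hF hxF)) ▸ hx⟩

variable (G) in
/-- The class of a recurrent configuration in the sandpile group `ℤ^V / Δ' ℤ^V`. -/
def toSandpileGroup (η : {η : α → ℕ // η G.sink = 0 ∧ G.Recurrent η}) :
    ({x : α // x ≠ G.sink} → ℤ) ⧸ LinearMap.range (G.reducedLaplacian ℤ).mulVecLin :=
  Submodule.Quotient.mk fun x => (η.1 x : ℤ)

lemma toSandpileGroup_injective (hloop : ∀ x, G.b x x = 0) :
    Function.Injective G.toSandpileGroup := by
  rintro ⟨η, hη_sink, hη⟩ ⟨η', hη'_sink, hη'⟩ h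
  obtain ⟨k, hk⟩ := (Submodule.Quotient.eq _).1 h
  ext x
  by_cases hx : x = G.sink
  · simp only [hx, hη_sink, hη'_sink]
  · refine hη.eq_of_sub_eq_laplacian hη' (extendZero_sink k) (fun y hy => ?_) hx
    rw [← reducedLaplacian_mulVec hloop k ⟨y, hy⟩]
    exact (congrFun hk ⟨y, hy⟩).symm

lemma toSandpileGroup_surjective (hG : G.IsSandpileGraph) :
    Function.Surjective G.toSandpileGroup := by
  intro q
  obtain ⟨σ, rfl⟩ := Submodule.Quotient.mk_surjective _ q
  obtain ⟨η, k, hη_sink, hη, hk_sink, hηk⟩ := exists_recurrent_eq_add_laplacian hG (extendZero σ)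
  refine ⟨⟨η, hη_sink, hη⟩, (Submodule.Quotient.eq _).2 ⟨fun x => k x, ?_⟩⟩
  ext x
  simp [reducedLaplacian_mulVec hG.2.1, extendZero_restrict hk_sink, hηk x x.2]

theorem card_recurrent (hG : G.IsSandpileGraph) :
    (Nat.card {η : α → ℕ // η G.sink = 0 ∧ G.Recurrent η} : ℝ) = G.lapRed.det := by
  have hdet := det_reducedLaplacian_int_pos hG
  rw [Nat.card_congr (Equiv.ofBijective G.toSandpileGroup
      ⟨toSandpileGroup_injective hG.2.1, toSandpileGroup_surjective hG⟩),
    natCard_quotient_range_mulVecLin _ hdet.ne', lapRed_det_eq_intCast, ← Int.cast_natCast,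
    Int.natAbs_of_nonneg hdet.le]

end Counting

section DeleteEdges

variable {α : Type*} [DecidableEq α] {G : Graph α}

/-- The number of edges of `E` oriented from `x` to `y`. -/
def numEdges (E : Finset G.OEdge) (x y : α) : ℕ :=
  (E.filter fun e => (e.1.1, e.1.2.1) = (x, y)).card

lemma numEdges_eq_card_filter_range {E : Finset G.OEdge} {x y : α} {p : ℕ → Prop}
    (hE : ∀ k (hk : k < G.b x y), (⟨(x, y, k), hk⟩ : G.OEdge) ∈ E ↔ p k) :
    numEdges E x y = ((Finset.range (G.b x y)).filter p).card := by
  refine Finset.card_nbij (fun e => e.1.2.2) ?_ ?_ ?_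
  · rintro ⟨⟨u, v, k⟩, hk⟩ he
    obtain ⟨hmem, huv⟩ := Finset.mem_filter.1 he
    obtain ⟨rfl, rfl⟩ := Prod.mk.inj huv
    exact Finset.mem_filter.2 ⟨Finset.mem_range.2 hk, (hE k hk).1 hmem⟩
  · intro e he e' he' hindex
    have hends := (Finset.mem_filter.1 he).2.trans (Finset.mem_filter.1 he').2.symm
    obtain ⟨htail, hhead⟩ := Prod.mk.inj hends
    exact Subtype.ext (Prod.ext htail (Prod.ext hhead hindex))
  · intro k hk
    obtain ⟨hk, hp⟩ := Finset.mem_filter.1 hk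
    rw [Finset.mem_range] at hk
    exact ⟨⟨(x, y, k), hk⟩, Finset.mem_filter.2 ⟨(hE k hk).2 hp, rfl⟩, rfl⟩

variable (G) in
/-- The graph `G` with the edges of `E` removed. Multiplicities are truncated at zero, so this is
meaningful only if `E` does not contain more edges between two vertices than `G` has, in the two
orientations together. -/
abbrev deleteEdges (E : Finset G.OEdge) : Graph α where
  sink := G.sink
  b x y := G.b x y - (numEdges E x y + numEdges E y x)

lemma deleteEdges_b_symm (hsymm : ∀ x y, G.b x y = G.b y x) (E : Finset G.OEdge) (x y : α) :
    (G.deleteEdges E).b x y = (G.deleteEdges E).b y x := by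
  change G.b x y - _ = G.b y x - _
  rw [hsymm x y, add_comm]

/-- The boundary of an edge oriented from `u` to `v`, as a function on the vertices. -/
def boundary (u v : α) : α → ℝ :=
  Pi.single u 1 - Pi.single v 1

variable [Fintype α]

lemma sum_edges_eq_sum_numEdges (E : Finset G.OEdge) (f : α → α → ℝ) :
    ∑ e ∈ E, f e.1.1 e.1.2.1 = ∑ x, ∑ y, (numEdges E x y : ℝ) * f x y := by
  rw [← Finset.sum_fiberwise E (fun e => (e.1.1, e.1.2.1)), Fintype.sum_prod_type]
  refine Finset.sum_congr rfl fun x _ => Finset.sum_congr rfl fun y _ => ?_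
  rw [numEdges, ← nsmul_eq_mul, ← Finset.sum_const]
  refine Finset.sum_congr rfl fun e he => ?_
  obtain ⟨hx, hy⟩ := Prod.mk.inj (Finset.mem_filter.1 he).2
  rw [hx, hy]

lemma laplacian_deleteEdges {E : Finset G.OEdge}
    (hE : ∀ x y, numEdges E x y + numEdges E y x ≤ G.b x y) (f : α → ℝ) (x : α) :
    (G.deleteEdges E).laplacian f x
      = G.laplacian f x - ∑ e ∈ E, boundary e.1.1 e.1.2.1 x * (f e.1.1 - f e.1.2.1) := by
  have hflow : ∑ e ∈ E, boundary e.1.1 e.1.2.1 x * (f e.1.1 - f e.1.2.1)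
      = ∑ y, ((numEdges E x y : ℝ) + numEdges E y x) * (f x - f y) := by
    rw [sum_edges_eq_sum_numEdges E fun u v => boundary u v x * (f u - f v)]
    simp only [boundary, Pi.sub_apply, Pi.single_apply, sub_mul, mul_sub, add_mul, ite_mul, mul_ite,
      one_mul, zero_mul, mul_zero, Finset.sum_sub_distrib, Finset.sum_add_distrib,
      Finset.sum_ite_eq, Finset.sum_ite_irrel, Finset.sum_const_zero, Finset.mem_univ, if_true]
    ring
  rw [hflow, laplacian, laplacian, ← Finset.sum_sub_distrib]
  refine Finset.sum_congr rfl fun y _ => ?_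
  simp only [Nat.cast_sub (hE x y), Nat.cast_add]
  ring

/-- The signed incidence matrix of the edges in `E`, without the row of the sink. -/
noncomputable def incidence (E : Finset G.OEdge) : Matrix {x : α // x ≠ G.sink} E ℝ :=
  Matrix.of fun x e => boundary e.1.1.1 e.1.1.2.1 x

lemma extendZero_eq_sum_single (v : {x : α // x ≠ G.sink} → ℝ) (x : α) :
    extendZero v x = ∑ z : {x : α // x ≠ G.sink}, (Pi.single x 1 : α → ℝ) z * v z := by
  trans ∑ z, (Pi.single x 1 : α → ℝ) z * extendZero v z
  · simp [Pi.single_apply]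
  · rw [← sum_subtype_ne_sink (G := G) (by simp)]
    simp

lemma incidence_transpose_mulVec (E : Finset G.OEdge) (v : {x : α // x ≠ G.sink} → ℝ) (e : E) :
    (incidence E).transpose.mulVec v e = extendZero v e.1.1.1 - extendZero v e.1.1.2.1 := by
  rw [extendZero_eq_sum_single, extendZero_eq_sum_single, ← Finset.sum_sub_distrib]
  exact Finset.sum_congr rfl fun x _ => sub_mul _ _ _

lemma lapRed_deleteEdges (hloop : ∀ x, G.b x x = 0) {E : Finset G.OEdge}
    (hE : ∀ x y, numEdges E x y + numEdges E y x ≤ G.b x y) :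
    (G.deleteEdges E).lapRed = G.lapRed + -incidence E * (incidence E).transpose := by
  have hloop' (x : α) : (G.deleteEdges E).b x x = 0 := by simp [hloop]
  refine Matrix.ext_iff_mulVec.2 fun v => funext fun x => ?_
  have hlap : G.lapRed.mulVec v x = G.laplacian (extendZero v) x :=
    reducedLaplacian_mulVec hloop v x
  have hlap' : (G.deleteEdges E).lapRed.mulVec v x
      = (G.deleteEdges E).laplacian (extendZero (G := G) v) x := reducedLaplacian_mulVec hloop' v x
  rw [Matrix.add_mulVec, ← Matrix.mulVec_mulVec, Matrix.neg_mulVec, Pi.add_apply, Pi.neg_apply,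
    ← sub_eq_add_neg, hlap', laplacian_deleteEdges hE, hlap, ← Finset.sum_coe_sort]
  refine congrArg _ (Finset.sum_congr rfl fun e _ => ?_)
  rw [incidence_transpose_mulVec]
  rfl

lemma Hfun_sink (y : α) : G.Hfun G.sink y = 0 := dif_pos rfl

lemma Hfun_coe (x : {x : α // x ≠ G.sink}) (y : α) :
    G.Hfun x y = extendZero (G.lapRed⁻¹ x) y := by
  by_cases hy : y = G.sink
  · rw [hy, extendZero_sink, Hfun, dif_neg x.2, dif_pos rfl]
  · rw [extendZero_coe _ ⟨y, hy⟩, Hfun, dif_neg x.2, dif_neg hy]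

lemma extendZero_inv_mulVec_incidence (E : Finset G.OEdge) (f : E) (x : α) :
    extendZero (G.lapRed⁻¹.mulVec ((incidence E).col f)) x
      = G.Hfun x f.1.1.1 - G.Hfun x f.1.1.2.1 := by
  by_cases hx : x = G.sink
  · rw [hx, extendZero_sink, Hfun_sink, Hfun_sink, sub_zero]
  · lift x to {x : α // x ≠ G.sink} using hx
    rw [extendZero_coe, Hfun_coe, Hfun_coe, ← incidence_transpose_mulVec]
    exact dotProduct_comm _ _

lemma Kmat_eq_one_sub_incidence (E : Finset G.OEdge) :
    Matrix.of (fun e f : E => G.Kmat e f)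
      = 1 + (incidence E).transpose * G.lapRed⁻¹ * -incidence E := by
  ext e f
  have hentry : ((incidence E).transpose * G.lapRed⁻¹ * incidence E) e f
      = (incidence E).transpose.mulVec (G.lapRed⁻¹.mulVec ((incidence E).col f)) e := by
    rw [Matrix.mul_assoc]
    rfl
  rw [Matrix.mul_neg, Matrix.add_apply, Matrix.neg_apply, hentry, incidence_transpose_mulVec,
    extendZero_inv_mulVec_incidence, extendZero_inv_mulVec_incidence, Matrix.of_apply, Kmat,
    Matrix.one_apply]
  simp only [Subtype.ext_iff]
  ring

theorem det_lapRed_deleteEdges (hG : G.IsSandpileGraph) {E : Finset G.OEdge}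
    (hE : ∀ x y, numEdges E x y + numEdges E y x ≤ G.b x y) :
    (G.deleteEdges E).lapRed.det
      = G.lapRed.det * (Matrix.of fun e f : E => G.Kmat e f).det := by
  rw [Kmat_eq_one_sub_incidence, ← Matrix.det_add_mul _ _ (det_lapRed_pos hG).ne'.isUnit,
    ← lapRed_deleteEdges hG.2.1 hE]

end DeleteEdges

section BurningTime

variable {α : Type*} {G : Graph α}

lemma degIn_mono {F F' : Finset α} (h : F ⊆ F') (x : α) : G.degIn F x ≤ G.degIn F' x :=
  Finset.sum_le_sum_of_subset h

lemma degIn_lt_degIn {F F' : Finset α} (h : F ⊆ F') {x y : α} (hxy : 0 < G.b x y)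
    (hy' : y ∈ F') (hy : y ∉ F) : G.degIn F x < G.degIn F' x :=
  Finset.sum_lt_sum_of_subset h hy' hy hxy fun _ _ _ => Nat.zero_le _

variable [Fintype α]

lemma degIn_eq_deg {F : Finset α} {x : α} (h : ∀ y, 0 < G.b x y → y ∈ F) :
    G.degIn F x = G.deg x :=
  Finset.sum_subset (Finset.subset_univ F) fun y _ hy => by
    simpa using mt (h y) hy

variable {ι : Type*} [LinearOrder ι]

variable (G) in
/-- `t` orders a run of the burning algorithm on `η`: every vertex other than the sink can burn
once its neighbours with a strictly smaller time have burnt. The time of the sink is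
unconstrained. -/
def IsBurningTime (η : α → ℕ) (t : α → ι) : Prop :=
  ∀ x ≠ G.sink, G.degIn (Finset.univ.filter fun y => t x ≤ t y) x ≤ η x

lemma IsBurningTime.mono {η η' : α → ℕ} {t : α → ι} (ht : G.IsBurningTime η t)
    (h : ∀ x ≠ G.sink, η x ≤ η' x) : G.IsBurningTime η' t :=
  fun x hx => (ht x hx).trans (h x hx)

variable [DecidableEq α]

lemma IsBurningTime.exists_adj_lt {η : α → ℕ} (hη : G.Stable η) {t : α → ι}
    (ht : G.IsBurningTime η t) {x : α} (hx : x ≠ G.sink) : ∃ y, 0 < G.b x y ∧ t y < t x := by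
  by_contra! hle
  have hdeg : G.degIn (Finset.univ.filter fun y => t x ≤ t y) x = G.deg x :=
    degIn_eq_deg fun y hy => by simpa using hle y hy
  exact (hη x (mem_VSet.2 hx)).not_ge (hdeg ▸ ht x hx)

lemma IsBurningTime.ampleFor {η : α → ℕ} {t : α → ι} (ht : G.IsBurningTime η t) {F : Finset α}
    (hF : F ⊆ G.VSet) (hne : F.Nonempty) : G.AmpleFor η F := by
  obtain ⟨x, hx, hmin⟩ := F.exists_min_image t hne
  refine ⟨x, hx, (degIn_mono (fun y hy => ?_) x).trans (ht x (mem_VSet.1 (hF hx)))⟩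
  simpa using hmin y hy

lemma IsBurningTime.recurrent {η : α → ℕ} {t : α → ι} (ht : G.IsBurningTime η t)
    (hη : G.Stable η) : G.Recurrent η :=
  ⟨hη, fun _ hF hne => ht.ampleFor hF hne⟩

lemma exists_burningTime_on {η : α → ℕ} (hη : ∀ F ⊆ G.VSet, F.Nonempty → G.AmpleFor η F)
    (U : Finset α) (hU : U ⊆ G.VSet) :
    ∃ t : α → ℕ, (∀ y ∉ U, t y = 0) ∧
      ∀ x ∈ U, G.degIn (Finset.univ.filter fun y => t x ≤ t y) x ≤ η x := by
  induction U using Finset.strongInduction with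
  | H U ih =>
    rcases U.eq_empty_or_nonempty with rfl | hne
    · exact ⟨0, fun _ _ => rfl, by simp⟩
    · obtain ⟨x, hxU, hx⟩ := hη U hU hne
      obtain ⟨t, ht_zero, ht⟩ := ih _ (U.erase_ssubset hxU) ((U.erase_subset x).trans hU)
      have htx : t x = 0 := ht_zero x (U.notMem_erase x)
      refine ⟨fun y => t y + if y ∈ U then 1 else 0, fun y hy => ?_, fun z hz => ?_⟩
      · simp [hy, ht_zero y fun h => hy (Finset.mem_of_mem_erase h)]
      · have hsub {y : α} (hy : t z + 1 ≤ t y + if y ∈ U then 1 else 0) :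
            y ∈ U ∧ t z ≤ t y := by
          by_cases hyU : y ∈ U
          · simpa [hyU] using hy
          · simp [hyU, ht_zero y fun h => hyU (Finset.mem_of_mem_erase h)] at hy
        simp only [if_pos hz]
        rcases eq_or_ne z x with rfl | hzx
        · exact (degIn_mono (fun y hy => (hsub (Finset.mem_filter.1 hy).2).1) z).trans hx
        · refine (degIn_mono (fun y hy => ?_) z).trans (ht z (Finset.mem_erase.2 ⟨hzx, hz⟩))
          simpa using (hsub (Finset.mem_filter.1 hy).2).2

lemma Recurrent.exists_isBurningTime {η : α → ℕ} (hη : G.Recurrent η) :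
    ∃ t : α → ℕ, t G.sink = 0 ∧ G.IsBurningTime η t := by
  obtain ⟨t, ht_zero, ht⟩ := exists_burningTime_on hη.2 G.VSet subset_rfl
  exact ⟨t, ht_zero _ (by simp), fun x hx => ht x (mem_VSet.2 hx)⟩

lemma Recurrent.isSandpileGraph {η : α → ℕ} (hη : G.Recurrent η)
    (hsymm : ∀ x y, G.b x y = G.b y x) (hloop : ∀ x, G.b x x = 0) : G.IsSandpileGraph := by
  obtain ⟨t, -, ht⟩ := hη.exists_isBurningTime
  have hreach (n : ℕ) : ∀ x, t x = n → Relation.ReflTransGen (0 < G.b · ·) x G.sink := by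
    induction n using Nat.strong_induction_on with
    | _ n ih =>
      rintro x rfl
      by_cases hx : x = G.sink
      · rw [hx]
      · obtain ⟨y, hxy, hlt⟩ := ht.exists_adj_lt hη.1 hx
        exact (ih (t y) hlt y rfl).head hxy
  have hswap : Std.Symm (fun x y => 0 < G.b x y) := ⟨fun x y h => hsymm x y ▸ h⟩
  exact ⟨hsymm, hloop, fun x y =>
    (hreach _ x rfl).trans (Relation.ReflTransGen.stdSymm.symm _ _ (hreach _ y rfl))⟩

lemma IsBurningTime.bridge {η : α → ℕ} (hη : G.Stable η) {t : α → ι}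
    (ht : G.IsBurningTime η t) {F : Finset α} (hF : F ⊆ G.VSet) {v w : α} (hw : w ∈ F)
    (hout : ∀ x ∈ F, ∀ y ∉ F, 0 < G.b x y → x = w ∧ y = v) (hvw : G.b w v = 1) :
    t v < t w ∧ η w = G.deg w - 1 := by
  obtain ⟨x, hx, hmin⟩ := F.exists_min_image t ⟨w, hw⟩
  obtain ⟨y, hxy, hlt⟩ := ht.exists_adj_lt hη (mem_VSet.1 (hF hx))
  have hy : y ∉ F := fun hy => (hmin y hy).not_gt hlt
  obtain ⟨rfl, rfl⟩ := hout x hx y hy hxy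
  refine ⟨hlt, ?_⟩
  have hnear : G.deg x - 1 ≤ G.degIn (Finset.univ.filter fun z => t x ≤ t z) x := by
    have hsplit : G.deg x = G.b x y + G.degIn (Finset.univ.erase y) x :=
      (Finset.add_sum_erase _ _ (Finset.mem_univ y)).symm
    have hle : G.degIn (Finset.univ.erase y) x
        ≤ G.degIn (Finset.univ.filter fun z => t x ≤ t z) x := by
      refine Finset.sum_le_sum_of_ne_zero fun z hz hxz => ?_
      by_cases hzF : z ∈ F
      · simpa using hmin z hzF
      · exact absurd (hout x hx z hzF (Nat.pos_of_ne_zero hxz)).2 (Finset.ne_of_mem_erase hz)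
    omega
  have := hnear.trans (ht x (mem_VSet.1 (hF hx)))
  have := hη x (hF hx)
  omega

end BurningTime

section Blocked

variable {α : Type*} [Fintype α] [DecidableEq α] {G : Graph α}

variable (G) in
/-- The vertices that the burning algorithm run on `M` cannot reach before `w` burns: the largest
set of non-sink vertices in which no vertex other than `w` can burn first. -/
def blocked (M : α → ℕ) (w : α) : Finset α :=
  Finset.univ.filter fun x => ∃ F ⊆ G.VSet, x ∈ F ∧ ∀ y ∈ F, y ≠ w → M y < G.degIn F y

variable {M : α → ℕ} {w : α}

lemma subset_blocked {F : Finset α} (hF : F ⊆ G.VSet)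
    (hstuck : ∀ y ∈ F, y ≠ w → M y < G.degIn F y) : F ⊆ G.blocked M w :=
  fun x hx => Finset.mem_filter.2 ⟨Finset.mem_univ x, F, hF, hx, hstuck⟩

lemma blocked_subset_VSet : G.blocked M w ⊆ G.VSet := fun _ hx =>
  let ⟨_, hF, hxF, _⟩ := (Finset.mem_filter.1 hx).2
  hF hxF

lemma self_mem_blocked (hw : w ≠ G.sink) : w ∈ G.blocked M w :=
  subset_blocked (F := {w}) (by simpa using hw) (by simp) (Finset.mem_singleton_self w)

lemma lt_degIn_blocked {y : α} (hy : y ∈ G.blocked M w) (hyw : y ≠ w) :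
    M y < G.degIn (G.blocked M w) y := by
  obtain ⟨F, hF, hyF, hstuck⟩ := (Finset.mem_filter.1 hy).2
  exact (hstuck y hyF hyw).trans_le (degIn_mono (subset_blocked hF hstuck) y)

lemma notMem_blocked_of_adj {y z : α} (hyw : y ≠ w) (hM : G.deg y - 1 ≤ M y)
    (hyz : 0 < G.b y z) (hz : z ∉ G.blocked M w) : y ∉ G.blocked M w := fun hy => by
  have hlt := lt_degIn_blocked hy hyw
  have hdeg : G.degIn (G.blocked M w) y < G.deg y :=
    degIn_lt_degIn (Finset.subset_univ _) hyz (Finset.mem_univ z) hz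
  omega

lemma IsBurningTime.lt_of_mem_blocked {ι : Type*} [LinearOrder ι] {t : α → ι}
    (ht : G.IsBurningTime M t) {y : α} (hy : y ∈ G.blocked M w) (hyw : y ≠ w) : t w < t y := by
  have hfirst {x : α} (hx : x ∈ G.blocked M w) (hmin : ∀ z ∈ G.blocked M w, t x ≤ t z) :
      x = w := by
    by_contra hxw
    refine ((lt_degIn_blocked hx hxw).trans_le (degIn_mono (fun z hz => ?_) x)).not_ge
      (ht x (mem_VSet.1 (blocked_subset_VSet hx)))
    simpa using hmin z hz
  obtain ⟨x, hx, hmin⟩ := Finset.exists_min_image _ t ⟨y, hy⟩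
  obtain rfl := hfirst hx hmin
  exact lt_of_not_ge fun hle => hyw (hfirst hy fun z hz => hle.trans (hmin z hz))

lemma Recurrent.degIn_blocked_le (hM : G.Recurrent M) (hw : w ≠ G.sink) :
    G.degIn (G.blocked M w) w ≤ M w := by
  obtain ⟨x, hx, hample⟩ := hM.2 _ blocked_subset_VSet ⟨w, self_mem_blocked hw⟩
  obtain rfl : x = w := by
    by_contra hxw
    exact (lt_degIn_blocked hx hxw).not_ge hample
  exact hample

lemma Recurrent.subOne (hM : G.Recurrent M) (hw : G.degIn (G.blocked M w) w < M w) :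
    G.Recurrent (SubOne M w) := by
  have hle (x : α) : SubOne M w x ≤ M x := by
    rw [SubOne]
    split_ifs <;> omega
  refine ⟨fun x hx => (hle x).trans_lt (hM.1 x hx), fun F hF hne => ?_⟩
  by_cases hstuck : ∀ y ∈ F, y ≠ w → M y < G.degIn F y
  · obtain ⟨x, hx, hample⟩ := hM.2 F hF hne
    obtain rfl : x = w := by
      by_contra hxw
      exact (hstuck x hx hxw).not_ge hample
    have := degIn_mono (G := G) (subset_blocked hF hstuck) x
    refine ⟨x, hx, ?_⟩
    rw [SubOne, if_pos rfl]
    omega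
  · push Not at hstuck
    obtain ⟨x, hx, hxw, hample⟩ := hstuck
    exact ⟨x, hx, by rwa [SubOne, if_neg hxw]⟩

end Blocked

section MaximalExtension

variable {α : Type*} [Fintype α] [DecidableEq α] {G : Graph α} {W : Finset α} {ξ η : α → ℕ}

variable (G W ξ) in
/-- The largest stable extension of a configuration `ξ` on `W`. -/
def maxExt (x : α) : ℕ := if x ∈ W then ξ x else G.deg x - 1

lemma maxExt_eqOn : EqOn (G.maxExt W ξ) ξ W := fun _ hx => if_pos hx

lemma maxExt_of_notMem {x : α} (hx : x ∉ W) : G.maxExt W ξ x = G.deg x - 1 := if_neg hx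

lemma le_maxExt (hη : G.Stable η) (hηξ : EqOn η ξ W) {x : α} (hx : x ≠ G.sink) :
    η x ≤ G.maxExt W ξ x := by
  by_cases hxW : x ∈ W
  · exact (hηξ x hxW).trans_le (maxExt_eqOn x hxW).ge
  · exact maxExt_of_notMem hxW ▸ Nat.le_sub_one_of_lt (hη x (mem_VSet.2 hx))

lemma Recurrent.maxExt (hη : G.Recurrent η) (hηξ : EqOn η ξ W) :
    G.Recurrent (G.maxExt W ξ) := by
  refine ⟨fun x hx => ?_, fun F hF hne => ?_⟩
  · have hlt := hη.1 x hx
    by_cases hxW : x ∈ W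
    · rwa [maxExt_eqOn x hxW, ← hηξ x hxW]
    · rw [maxExt_of_notMem hxW]
      omega
  · obtain ⟨x, hxF, hx⟩ := hη.2 F hF hne
    exact ⟨x, hxF, hx.trans (le_maxExt hη.1 hηξ (mem_VSet.1 (hF hxF)))⟩

lemma Minimal.recurrent_maxExt (hmin : G.Minimal W ξ) : G.Recurrent (G.maxExt W ξ) :=
  let ⟨_, hη, hηξ⟩ := hmin.1
  hη.maxExt hηξ

lemma Minimal.eq_degIn_blocked (hmin : G.Minimal W ξ) {w : α} (hw : w ∈ W)
    (hws : w ≠ G.sink) : ξ w = G.degIn (G.blocked (G.maxExt W ξ) w) w := by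
  have hrec := hmin.recurrent_maxExt
  have hle := hrec.degIn_blocked_le hws
  have hnot := hmin.2 _ hrec maxExt_eqOn w hw
  rw [← maxExt_eqOn (G := G) (ξ := ξ) w hw]
  refine le_antisymm (le_of_not_gt fun hlt => hnot ⟨by omega, hrec.subOne hlt⟩) hle

end MaximalExtension

section BurnsBefore

variable {α : Type*} [Fintype α] [DecidableEq α] {G : Graph α} {W : Finset α} {ξ : α → ℕ}

variable (G W ξ) in
/-- The neighbour `y` of the vertex `w` of `W` burns before `w` in every recurrent extension of the
minimal configuration `ξ`. This is read off from the maximal extension only. -/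
def BurnsBefore (y w : α) : Prop := w ∈ W ∧ 0 < G.b w y ∧ y ∉ G.blocked (G.maxExt W ξ) w

lemma Minimal.eq_degIn_not_burnsBefore (hmin : G.Minimal W ξ) {w : α} (hw : w ∈ W)
    (hws : w ≠ G.sink) :
    ξ w = G.degIn (Finset.univ.filter fun y => ¬ G.BurnsBefore W ξ y w) w := by
  rw [hmin.eq_degIn_blocked hw hws]
  refine Finset.sum_subset (fun y hy => ?_) fun y hy hy' => ?_
  · simp [BurnsBefore, hy]
  · by_contra hb
    exact (Finset.mem_filter.1 hy).2 ⟨hw, Nat.pos_of_ne_zero hb, hy'⟩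

lemma Minimal.exists_burnsBefore (hmin : G.Minimal W ξ) {w : α} (hw : w ∈ W)
    (hws : w ≠ G.sink) : ∃ y, G.BurnsBefore W ξ y w := by
  obtain ⟨η, hη, hηξ⟩ := hmin.1
  have hlt := hη.1 w (mem_VSet.2 hws)
  by_contra! hno
  rw [hηξ w hw, hmin.eq_degIn_not_burnsBefore hw hws, degIn_eq_deg fun y _ => by simpa using hno y]
    at hlt
  exact hlt.false

/-- If `y` burnt no earlier than `w`, then neither `y` nor the vertices blocked by `w` could have
contributed to the burning of `w`, for which `ξ w` would then be too small. -/
lemma Minimal.lt_of_burnsBefore (hmin : G.Minimal W ξ) {ι : Type*} [LinearOrder ι] {t : α → ι}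
    {η : α → ℕ} (hη : G.Stable η) (hηξ : EqOn η ξ W) (ht : G.IsBurningTime η t) {y w : α}
    (hws : w ≠ G.sink) (h : G.BurnsBefore W ξ y w) : t y < t w := by
  obtain ⟨hw, hwy, hy⟩ := h
  by_contra! hle
  have hsub : G.blocked (G.maxExt W ξ) w ⊆ Finset.univ.filter fun z => t w ≤ t z := fun z hz => by
    rcases eq_or_ne z w with rfl | hzw
    · simp
    · simpa using ((ht.mono fun x hx => le_maxExt hη hηξ hx).lt_of_mem_blocked hz hzw).le
  have hlt := (degIn_lt_degIn hsub hwy (by simpa using hle) hy).trans_le (ht w hws)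
  rw [hηξ w hw, hmin.eq_degIn_blocked hw hws] at hlt
  exact hlt.false

lemma burnsBefore_or_burnsBefore (hsymm : ∀ x y, G.b x y = G.b y x) (hloop : ∀ x, G.b x x = 0)
    {t : α → ℕ} (ht : G.IsBurningTime (G.maxExt W ξ) t) {w y : α} (hw : w ∈ W) (hy : y ∈ W)
    (hwy : 0 < G.b w y) : G.BurnsBefore W ξ y w ∨ G.BurnsBefore W ξ w y := by
  have hne : y ≠ w := by
    rintro rfl
    simp [hloop] at hwy
  by_contra! h
  have hyw : y ∈ G.blocked (G.maxExt W ξ) w := by_contra fun hy' => h.1 ⟨hw, hwy, hy'⟩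
  have hwy : w ∈ G.blocked (G.maxExt W ξ) y := by_contra fun hw' => h.2 ⟨hy, hsymm w y ▸ hwy, hw'⟩
  exact (ht.lt_of_mem_blocked hyw hne).asymm (ht.lt_of_mem_blocked hwy hne.symm)

variable (G W ξ) in
/-- The vertices of `W` which block `x` in the maximal extension of `ξ`. -/
def blockers (x : α) : Finset α := W.filter fun w => x ∈ G.blocked (G.maxExt W ξ) w

lemma mem_blockers {x w : α} :
    w ∈ G.blockers W ξ x ↔ w ∈ W ∧ x ∈ G.blocked (G.maxExt W ξ) w := Finset.mem_filter

lemma mem_blocked_of_adj {w x y : α} (hyx : 0 < G.b y x) (hy : y ∉ W) (hyw : y ≠ w)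
    (h : y ∈ G.blocked (G.maxExt W ξ) w) : x ∈ G.blocked (G.maxExt W ξ) w :=
  by_contra fun hx => notMem_blocked_of_adj hyw (maxExt_of_notMem hy).ge hyx hx h

lemma blockers_eq_of_adj (hsymm : ∀ x y, G.b x y = G.b y x) {x y : α} (hx : x ∉ W) (hy : y ∉ W)
    (hxy : 0 < G.b x y) : G.blockers W ξ x = G.blockers W ξ y :=
  Finset.filter_congr fun _ hw =>
    ⟨mem_blocked_of_adj hxy hx (ne_of_mem_of_not_mem hw hx).symm,
      mem_blocked_of_adj (hsymm x y ▸ hxy) hy (ne_of_mem_of_not_mem hw hy).symm⟩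

lemma blockers_sink : G.blockers W ξ G.sink = ∅ :=
  Finset.filter_eq_empty_iff.2 fun _ _ h => by simpa using blocked_subset_VSet h

end BurnsBefore

section Latest

variable {α : Type*} {G : Graph α} {t : α → ℕ} {S : Finset α}

variable (G t) in
/-- An element of `S` of largest time, or the sink if `S` is empty. -/
noncomputable def latest (S : Finset α) : α :=
  if hS : S.Nonempty then (S.exists_max_image t hS).choose else G.sink

lemma latest_empty : G.latest t ∅ = G.sink := dif_neg Finset.not_nonempty_empty

lemma latest_mem (hS : S.Nonempty) : G.latest t S ∈ S := by
  rw [latest, dif_pos hS]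
  exact (S.exists_max_image t hS).choose_spec.1

lemma le_latest {x : α} (hx : x ∈ S) : t x ≤ t (G.latest t S) := by
  have hS : S.Nonempty := ⟨x, hx⟩
  rw [latest, dif_pos hS]
  exact (S.exists_max_image t hS).choose_spec.2 x hx

end Latest

section BurningForest

variable {α : Type*} [Fintype α] [DecidableEq α]

/-- The tree along which fire spreads in every recurrent extension of a minimal configuration `ξ`
on `W`, with the components of the complement of `W` contracted: a vertex of `W` has a parent among
the neighbours burning before it, and a component of the complement hangs below the vertex of `W`
through which fire enters it, or below the sink if it is not confined by `W`. The rank of a vertex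
bounds its depth; a component has the rank of its parent. -/
structure BurningForest (G : Graph α) (W : Finset α) (ξ : α → ℕ) where
  parent : α → α
  rank : α → ℕ
  parent_sink : parent G.sink = G.sink
  burnsBefore_parent {w : α} : w ∈ W → G.BurnsBefore W ξ (parent w) w
  parent_eq_of_adj {x y : α} : x ∉ W → y ∉ W → 0 < G.b x y → parent x = parent y
  rank_lt {y w : α} : G.BurnsBefore W ξ y w → rank y < rank w
  rank_parent {x : α} : x ∉ W → rank (parent x) = rank x
  adj_cases {w y : α} : w ∈ W → 0 < G.b w y →
    G.BurnsBefore W ξ y w ∨ G.BurnsBefore W ξ w y ∨ y ∉ W ∧ parent y = w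

variable {G : Graph α} {W : Finset α} {ξ : α → ℕ} {t : α → ℕ}

lemma latest_blockers_le (hts : t G.sink = 0) (ht : G.IsBurningTime (G.maxExt W ξ) t) {x : α}
    (hx : x ∉ W) : t (G.latest t (G.blockers W ξ x)) ≤ t x := by
  rcases (G.blockers W ξ x).eq_empty_or_nonempty with h | h
  · simp [h, latest_empty, hts]
  · obtain ⟨hw, hxw⟩ := mem_blockers.1 (latest_mem (G := G) (t := t) h)
    exact (ht.lt_of_mem_blocked hxw (ne_of_mem_of_not_mem hw hx).symm).le

/-- Otherwise the last vertex blocking `y` would also block its neighbour `w`. -/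
lemma burnsBefore_or_latest_blockers_eq (hsymm : ∀ x y, G.b x y = G.b y x)
    (ht : G.IsBurningTime (G.maxExt W ξ) t) {w y : α} (hw : w ∈ W) (hy : y ∉ W)
    (hwy : 0 < G.b w y) :
    G.BurnsBefore W ξ y w ∨ G.latest t (G.blockers W ξ y) = w := by
  by_contra! h
  have hwb : w ∈ G.blockers W ξ y := mem_blockers.2 ⟨hw, by_contra fun hyw => h.1 ⟨hw, hwy, hyw⟩⟩
  obtain ⟨hv, hyv⟩ := mem_blockers.1 (latest_mem (G := G) (t := t) ⟨w, hwb⟩)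
  have hwv := mem_blocked_of_adj (hsymm w y ▸ hwy) hy (ne_of_mem_of_not_mem hv hy).symm hyv
  exact (ht.lt_of_mem_blocked hwv h.2.symm).not_ge (le_latest hwb)

theorem Minimal.exists_burningForest (hsymm : ∀ x y, G.b x y = G.b y x)
    (hloop : ∀ x, G.b x x = 0) (hmin : G.Minimal W ξ) (hW : G.sink ∉ W) :
    Nonempty (G.BurningForest W ξ) := by
  have hrec := hmin.recurrent_maxExt
  obtain ⟨t, hts, ht⟩ := hrec.exists_isBurningTime
  have hws {w : α} (hw : w ∈ W) : w ≠ G.sink := ne_of_mem_of_not_mem hw hW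
  choose! p hp using fun w (hw : w ∈ W) => hmin.exists_burnsBefore hw (hws hw)
  let q (x : α) : α := G.latest t (G.blockers W ξ x)
  have hq_sink : q G.sink = G.sink := by simp [q, blockers_sink, latest_empty]
  have hq (x : α) : q x = G.sink ∨ q x ∈ W := by
    rcases (G.blockers W ξ x).eq_empty_or_nonempty with h | h
    · exact .inl (by simp [q, h, latest_empty])
    · exact .inr (mem_blockers.1 (latest_mem h)).1
  have hlt {y w : α} (h : G.BurnsBefore W ξ y w) : t y < t w :=
    hmin.lt_of_burnsBefore hrec.1 maxExt_eqOn ht (hws h.1) h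
  refine ⟨{
    parent x := if x ∈ W then p x else q x
    rank x := if x ∈ W then t x else t (q x)
    parent_sink := ?_
    burnsBefore_parent := fun hw => by simpa only [if_pos hw] using hp _ hw
    parent_eq_of_adj := fun hx hy hxy => ?_
    rank_lt := fun {y w} h => ?_
    rank_parent := fun {x} hx => ?_
    adj_cases := fun {w y} hw hwy => ?_ }⟩
  · rw [if_neg hW, hq_sink]
  · simp only [if_neg hx, if_neg hy, q, blockers_eq_of_adj hsymm hx hy hxy]
  · rw [if_pos h.1]
    split_ifs with hy
    · exact hlt h
    · exact (latest_blockers_le hts ht hy).trans_lt (hlt h)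
  · rw [if_neg hx, if_neg hx]
    rcases hq x with h | h
    · rw [h, if_neg hW, hq_sink]
    · rw [if_pos h]
  · by_cases hy : y ∈ W
    · exact (burnsBefore_or_burnsBefore hsymm hloop ht hw hy hwy).imp_right .inl
    · simpa only [if_neg hy, hy, not_false_eq_true, true_and] using
        (burnsBefore_or_latest_blockers_eq hsymm ht hw hy hwy).imp_right .inr

end BurningForest

instance {α : Type*} [Finite α] {G : Graph α} : Finite G.OEdge :=
  Finite.of_surjective
    (fun k : Σ p : α × α, Fin (G.b p.1 p.2) => (⟨(k.1.1, k.1.2, k.2), k.2.2⟩ : G.OEdge))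
    fun ⟨(x, y, k), hk⟩ => ⟨⟨(x, y), k, hk⟩, rfl⟩

namespace BurningForest

variable {α : Type*} [Fintype α] [DecidableEq α] {G : Graph α} {W : Finset α} {ξ : α → ℕ}

section Cut

variable (T : G.BurningForest W ξ)

/-- The edges from a vertex `w` of `W` to a vertex burning before `w`, except for one edge from `w`
to its parent. They are oriented away from `w`. -/
noncomputable def cutEdges : Finset G.OEdge :=
  Set.Finite.toFinset (s := {e | G.BurnsBefore W ξ e.1.2.1 e.1.1 ∧
    (e.1.2.1 = T.parent e.1.1 → e.1.2.2 ≠ 0)}) (Set.toFinite _)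

variable {T} in
lemma mem_cutEdges {e : G.OEdge} :
    e ∈ T.cutEdges ↔
      G.BurnsBefore W ξ e.1.2.1 e.1.1 ∧ (e.1.2.1 = T.parent e.1.1 → e.1.2.2 ≠ 0) :=
  Set.Finite.mem_toFinset _

/-- The graph in which fire can reach a vertex of `W` from outside its branch only along the edge
from its parent. -/
noncomputable abbrev cut : Graph α := G.deleteEdges T.cutEdges

lemma numEdges_cutEdges {x y : α} (h : G.BurnsBefore W ξ y x) :
    numEdges T.cutEdges x y = G.b x y - if y = T.parent x then 1 else 0 := by
  rw [numEdges_eq_card_filter_range (p := fun k => y = T.parent x → k ≠ 0)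
    fun k hk => by simp [mem_cutEdges, h]]
  split_ifs with hy
  · simp only [hy, true_imp_iff, Finset.filter_ne']
    rw [Finset.card_erase_of_mem (Finset.mem_range.2 (hy ▸ h.2.1)), Finset.card_range]
  · simp [hy]

lemma numEdges_cutEdges_eq_zero {x y : α} (h : ¬ G.BurnsBefore W ξ y x) :
    numEdges T.cutEdges x y = 0 := by
  rw [numEdges, Finset.card_eq_zero, Finset.filter_eq_empty_iff]
  intro e he hxy
  obtain ⟨rfl, rfl⟩ := Prod.mk.inj hxy
  exact h (mem_cutEdges.1 he).1

include T in
lemma not_burnsBefore_of_burnsBefore {x y : α} (h : G.BurnsBefore W ξ y x) :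
    ¬ G.BurnsBefore W ξ x y :=
  fun h' => (T.rank_lt h).asymm (T.rank_lt h')

lemma cut_b_of_burnsBefore {x y : α} (h : G.BurnsBefore W ξ y x) :
    T.cut.b x y = if y = T.parent x then 1 else 0 := by
  have hpos := h.2.1
  change G.b x y - _ = _
  rw [T.numEdges_cutEdges h,
    T.numEdges_cutEdges_eq_zero (T.not_burnsBefore_of_burnsBefore h)]
  split_ifs <;> omega

lemma cut_b_of_not_burnsBefore {x y : α} (h : ¬ G.BurnsBefore W ξ y x)
    (h' : ¬ G.BurnsBefore W ξ x y) : T.cut.b x y = G.b x y := by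
  change G.b x y - _ = _
  rw [T.numEdges_cutEdges_eq_zero h, T.numEdges_cutEdges_eq_zero h', add_zero, Nat.sub_zero]

lemma cut_b_parent {w : α} (hw : w ∈ W) : T.cut.b w (T.parent w) = 1 := by
  rw [T.cut_b_of_burnsBefore (T.burnsBefore_parent hw), if_pos rfl]

lemma cut_deg_pos {w : α} (hw : w ∈ W) : 0 < T.cut.deg w :=
  (T.cut_b_parent hw ▸ Nat.one_pos).trans_le
    (Finset.single_le_sum (fun _ _ => Nat.zero_le _) (Finset.mem_univ (T.parent w)))

lemma cut_deg_le (x : α) : T.cut.deg x ≤ G.deg x :=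
  Finset.sum_le_sum fun _ _ => Nat.sub_le _ _

lemma deg_add_cut_degIn {x : α} (hx : x ∉ W) {F : Finset α}
    (hF : ∀ y, G.BurnsBefore W ξ x y → y ∈ F) :
    G.deg x + T.cut.degIn F x = T.cut.deg x + G.degIn F x := by
  have hcompl : T.cut.degIn Fᶜ x = G.degIn Fᶜ x := Finset.sum_congr rfl fun y hy =>
    T.cut_b_of_not_burnsBefore (fun h => hx h.1) fun h => Finset.mem_compl.1 hy (hF y h)
  have hsplit (H : Graph α) : H.deg x = H.degIn F x + H.degIn Fᶜ x :=
    (Finset.sum_add_sum_compl F _).symm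
  rw [hsplit G, hsplit T.cut, hcompl]
  ring

variable (hsymm : ∀ x y, G.b x y = G.b y x)

include hsymm

lemma numEdges_cutEdges_add_le (x y : α) :
    numEdges T.cutEdges x y + numEdges T.cutEdges y x ≤ G.b x y := by
  by_cases h : G.BurnsBefore W ξ y x
  · rw [T.numEdges_cutEdges h,
      T.numEdges_cutEdges_eq_zero (T.not_burnsBefore_of_burnsBefore h)]
    exact Nat.sub_le _ _
  · rw [T.numEdges_cutEdges_eq_zero h, zero_add]
    by_cases h' : G.BurnsBefore W ξ x y
    · rw [T.numEdges_cutEdges h', hsymm x y]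
      exact Nat.sub_le _ _
    · simp [T.numEdges_cutEdges_eq_zero h']

lemma parent_cases_of_cut_adj {x y : α} (hxy : 0 < T.cut.b x y) :
    y = T.parent x ∨ x = T.parent y ∨ x ∉ W ∧ y ∉ W ∧ T.parent x = T.parent y := by
  have hb : 0 < G.b x y := hxy.trans_le (Nat.sub_le _ _)
  have hparent {x y : α} (h : G.BurnsBefore W ξ y x) (hxy : 0 < T.cut.b x y) : y = T.parent x := by
    by_contra hne
    rw [T.cut_b_of_burnsBefore h, if_neg hne] at hxy
    exact hxy.false
  by_cases h : G.BurnsBefore W ξ y x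
  · exact .inl (hparent h hxy)
  by_cases h' : G.BurnsBefore W ξ x y
  · exact .inr (.inl (hparent h' (deleteEdges_b_symm hsymm _ x y ▸ hxy)))
  by_cases hx : x ∈ W
  · have := T.adj_cases hx hb
    tauto
  by_cases hy : y ∈ W
  · have := T.adj_cases hy (hsymm x y ▸ hb)
    tauto
  exact .inr (.inr ⟨hx, hy, T.parent_eq_of_adj hx hy hb⟩)

end Cut

section Branch

variable (T : G.BurningForest W ξ)

/-- The vertices which descend from `w`, including `w` itself. -/
noncomputable def branch (w : α) : Finset α :=
  Finset.univ.filter fun x => ∃ n, T.parent^[n] x = w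

variable {T}

lemma mem_branch {w x : α} : x ∈ T.branch w ↔ ∃ n, T.parent^[n] x = w := by
  simp [branch]

lemma self_mem_branch (w : α) : w ∈ T.branch w := mem_branch.2 ⟨0, rfl⟩

lemma mem_branch_of_parent_mem {w x : α} (h : T.parent x ∈ T.branch w) : x ∈ T.branch w :=
  let ⟨n, hn⟩ := mem_branch.1 h
  mem_branch.2 ⟨n + 1, hn⟩

lemma parent_mem_branch {w x : α} (h : x ∈ T.branch w) (hx : x ≠ w) :
    T.parent x ∈ T.branch w := by
  obtain ⟨_ | n, hn⟩ := mem_branch.1 h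
  · exact absurd hn hx
  · exact mem_branch.2 ⟨n, hn⟩

lemma branch_subset_VSet {w : α} (hws : w ≠ G.sink) : T.branch w ⊆ G.VSet := fun x hx => by
  obtain ⟨n, hn⟩ := mem_branch.1 hx
  rw [mem_VSet]
  rintro rfl
  exact hws (hn.symm.trans (Function.iterate_fixed T.parent_sink n))

lemma eq_of_cut_adj_branch (hsymm : ∀ x y, G.b x y = G.b y x) {w x y : α} (hw : w ∈ W)
    (hx : x ∈ T.branch w) (hy : y ∉ T.branch w) (hxy : 0 < T.cut.b x y) :
    x = w ∧ y = T.parent w := by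
  rcases T.parent_cases_of_cut_adj hsymm hxy with rfl | rfl | ⟨hxW, -, hparent⟩
  · obtain rfl : x = w := by_contra fun hxw => hy (parent_mem_branch hx hxw)
    exact ⟨rfl, rfl⟩
  · exact absurd (mem_branch_of_parent_mem hx) hy
  · have := parent_mem_branch hx (ne_of_mem_of_not_mem hw hxW).symm
    exact absurd (mem_branch_of_parent_mem (hparent ▸ this)) hy

lemma cut_bridge (hsymm : ∀ x y, G.b x y = G.b y x) {ι : Type*} [LinearOrder ι] {η : α → ℕ}
    (hη : T.cut.Stable η) {t : α → ι} (ht : T.cut.IsBurningTime η t) {w : α} (hw : w ∈ W)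
    (hws : w ≠ G.sink) : t (T.parent w) < t w ∧ η w = T.cut.deg w - 1 :=
  ht.bridge (F := T.branch w) hη (branch_subset_VSet hws) (self_mem_branch w)
    (fun _ hx _ hy => eq_of_cut_adj_branch hsymm hw hx hy) (T.cut_b_parent hw)

end Branch

section Bijection

variable (T : G.BurningForest W ξ)

/-- The recurrent configuration of the cut graph corresponding to a recurrent extension of `ξ`:
outside `W`, particles are removed together with the cut edges. -/
noncomputable def toCut (η : α → ℕ) (x : α) : ℕ :=
  if x ∈ W then T.cut.deg x - 1 else η x - (G.deg x - T.cut.deg x)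

/-- The inverse of `BurningForest.toCut`. -/
noncomputable def ofCut (η : α → ℕ) (x : α) : ℕ :=
  if x = G.sink then 0 else if x ∈ W then ξ x else η x + (G.deg x - T.cut.deg x)

variable {η : α → ℕ} {t : α → ℕ}

lemma toCut_of_mem {x : α} (hx : x ∈ W) : T.toCut η x = T.cut.deg x - 1 := if_pos hx

lemma toCut_of_notMem {x : α} (hx : x ∉ W) : T.toCut η x = η x - (G.deg x - T.cut.deg x) :=
  if_neg hx

lemma ofCut_sink : T.ofCut η G.sink = 0 := if_pos rfl

lemma ofCut_of_mem {x : α} (hx : x ∈ W) (hxs : x ≠ G.sink) : T.ofCut η x = ξ x := by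
  rw [ofCut, if_neg hxs, if_pos hx]

lemma ofCut_of_notMem {x : α} (hx : x ∉ W) (hxs : x ≠ G.sink) :
    T.ofCut η x = η x + (G.deg x - T.cut.deg x) := by
  rw [ofCut, if_neg hxs, if_neg hx]

lemma cut_degIn_add_le (ht : G.IsBurningTime η t)
    (hlt : ∀ {w y}, G.BurnsBefore W ξ y w → t y < t w) {x : α} (hx : x ∉ W) (hxs : x ≠ G.sink) :
    T.cut.degIn (Finset.univ.filter fun y => t x ≤ t y) x + (G.deg x - T.cut.deg x) ≤ η x := by
  have hdeg := T.deg_add_cut_degIn hx (F := Finset.univ.filter fun y => t x ≤ t y)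
    fun y h => by simpa using (hlt h).le
  have := ht x hxs
  have := T.cut_deg_le x
  omega

lemma isBurningTime_toCut (ht : G.IsBurningTime η t)
    (hlt : ∀ {w y}, G.BurnsBefore W ξ y w → t y < t w) :
    T.cut.IsBurningTime (T.toCut η) t := fun x hxs => by
  by_cases hx : x ∈ W
  · rw [toCut_of_mem _ hx]
    exact Nat.le_sub_one_of_lt (degIn_lt_degIn (Finset.subset_univ _)
      (T.cut_b_parent hx ▸ Nat.one_pos) (Finset.mem_univ (T.parent x))
      (by simpa using hlt (T.burnsBefore_parent hx)))
  · rw [toCut_of_notMem _ hx]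
    exact Nat.le_sub_of_add_le (T.cut_degIn_add_le ht hlt hx hxs)

lemma stable_toCut (hη : G.Stable η) (hle : ∀ x ∉ W, x ≠ G.sink → G.deg x - T.cut.deg x ≤ η x) :
    T.cut.Stable (T.toCut η) := fun x hx => by
  by_cases hxW : x ∈ W
  · rw [toCut_of_mem _ hxW]
    exact Nat.sub_one_lt (T.cut_deg_pos hxW).ne'
  · rw [toCut_of_notMem _ hxW]
    have := hle x hxW (mem_VSet.1 hx)
    have := hη x hx
    omega

variable (t) in
/-- The order in which `BurningForest.ofCut` burns in `G`, if `t` is the order in the cut graph: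
by rank, then each vertex of `W` before the components below it, then according to `t`. -/
def cutOrder (x : α) : ℕ ×ₗ ℕ := toLex (T.rank x, if x ∈ W then 0 else t x)

lemma cutOrder_lt_of_rank_lt {x y : α} (h : T.rank y < T.rank x) :
    T.cutOrder t y < T.cutOrder t x :=
  Prod.Lex.toLex_lt_toLex.2 (.inl h)

lemma cutOrder_lt_of_rank_eq {x y : α} (hrank : T.rank y = T.rank x) (hx : x ∉ W)
    (h : t y < t x) : T.cutOrder t y < T.cutOrder t x := by
  refine Prod.Lex.toLex_lt_toLex.2 (.inr ⟨hrank, ?_⟩)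
  simp only [if_neg hx]
  split_ifs <;> omega

variable (hsymm : ∀ x y, G.b x y = G.b y x) (hW : G.sink ∉ W)

include hsymm hW

lemma cutOrder_lt_of_cut_adj (hη : T.cut.Stable η) (ht : T.cut.IsBurningTime η t) {x y : α}
    (hx : x ∉ W) (hxy : 0 < T.cut.b x y) (h : t y < t x) : T.cutOrder t y < T.cutOrder t x := by
  refine T.cutOrder_lt_of_rank_eq ?_ hx h
  rcases T.parent_cases_of_cut_adj hsymm hxy with rfl | rfl | ⟨-, hy, hparent⟩
  · exact T.rank_parent hx
  · refine (T.rank_parent fun hy => h.asymm ?_).symm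
    exact (cut_bridge hsymm hη ht hy (ne_of_mem_of_not_mem hy hW)).1
  · rw [← T.rank_parent hx, ← T.rank_parent hy, hparent]

lemma isBurningTime_ofCut (hmin : G.Minimal W ξ) (hη : T.cut.Stable η)
    (ht : T.cut.IsBurningTime η t) : G.IsBurningTime (T.ofCut η) (T.cutOrder t) := fun x hxs => by
  by_cases hx : x ∈ W
  · rw [ofCut_of_mem _ hx hxs, hmin.eq_degIn_not_burnsBefore hx hxs]
    refine degIn_mono (fun y hy => ?_) x
    simp only [Finset.mem_filter, Finset.mem_univ, true_and] at hy ⊢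
    exact fun h => (T.cutOrder_lt_of_rank_lt (T.rank_lt h)).not_ge hy
  · have hdeg := T.deg_add_cut_degIn hx
      (F := Finset.univ.filter fun y => T.cutOrder t x ≤ T.cutOrder t y)
      fun y h => by simpa using (T.cutOrder_lt_of_rank_lt (T.rank_lt h)).le
    have hcut : T.cut.degIn (Finset.univ.filter fun y => T.cutOrder t x ≤ T.cutOrder t y) x
        ≤ T.cut.degIn (Finset.univ.filter fun y => t x ≤ t y) x := by
      refine Finset.sum_le_sum_of_ne_zero fun y hy hxy => ?_
      simp only [Finset.mem_filter, Finset.mem_univ, true_and] at hy ⊢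
      refine le_of_not_gt fun hlt => hy.not_gt ?_
      exact T.cutOrder_lt_of_cut_adj hsymm hW hη ht hx (Nat.pos_of_ne_zero hxy) hlt
    have := ht x hxs
    have := T.cut_deg_le x
    rw [ofCut_of_notMem _ hx hxs]
    omega

lemma recurrent_ofCut (hmin : G.Minimal W ξ) (hη : T.cut.Recurrent η) :
    G.Recurrent (T.ofCut η) := by
  obtain ⟨t, -, ht⟩ := hη.exists_isBurningTime
  refine (T.isBurningTime_ofCut hsymm hW hmin hη.1 ht).recurrent fun x hx => ?_
  have hxs := mem_VSet.1 hx
  by_cases hxW : x ∈ W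
  · obtain ⟨ζ, hζ, hζξ⟩ := hmin.1
    rw [ofCut_of_mem _ hxW hxs, ← hζξ x hxW]
    exact hζ.1 x hx
  · rw [ofCut_of_notMem _ hxW hxs]
    have := hη.1 x hx
    have := T.cut_deg_le x
    omega

omit hsymm in
lemma recurrent_toCut (hmin : G.Minimal W ξ) (hη : G.Recurrent η) (hηξ : EqOn η ξ W) :
    T.cut.Recurrent (T.toCut η) ∧ ∀ x ∉ W, x ≠ G.sink → G.deg x - T.cut.deg x ≤ η x := by
  obtain ⟨t, -, ht⟩ := hη.exists_isBurningTime
  have hlt {w y : α} (h : G.BurnsBefore W ξ y w) : t y < t w :=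
    hmin.lt_of_burnsBefore hη.1 hηξ ht (ne_of_mem_of_not_mem h.1 hW) h
  have hle (x : α) (hx : x ∉ W) (hxs : x ≠ G.sink) : G.deg x - T.cut.deg x ≤ η x :=
    le_of_add_le_right (T.cut_degIn_add_le ht hlt hx hxs)
  exact ⟨(T.isBurningTime_toCut ht hlt).recurrent (T.stable_toCut hη.1 hle), hle⟩

lemma cut_isSandpileGraph (hloop : ∀ x, G.b x x = 0) (hmin : G.Minimal W ξ) :
    T.cut.IsSandpileGraph := by
  obtain ⟨η, hη, hηξ⟩ := hmin.1
  exact (T.recurrent_toCut hW hmin hη hηξ).1.isSandpileGraph (deleteEdges_b_symm hsymm _)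
    fun x => by simp [hloop]

omit hsymm in
lemma ofCut_toCut (hmin : G.Minimal W ξ) (hηs : η G.sink = 0) (hη : G.Recurrent η)
    (hηξ : EqOn η ξ W) : T.ofCut (T.toCut η) = η := funext fun x => by
  by_cases hxs : x = G.sink
  · rw [hxs, ofCut_sink, hηs]
  by_cases hx : x ∈ W
  · rw [ofCut_of_mem _ hx hxs, hηξ x hx]
  · rw [ofCut_of_notMem _ hx hxs, toCut_of_notMem _ hx,
      Nat.sub_add_cancel ((T.recurrent_toCut hW hmin hη hηξ).2 x hx hxs)]

lemma toCut_ofCut (hηs : η G.sink = 0) (hη : T.cut.Recurrent η) : T.toCut (T.ofCut η) = η :=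
  funext fun x => by
    by_cases hxs : x = G.sink
    · rw [hxs, toCut_of_notMem _ hW, ofCut_sink, Nat.zero_sub, hηs]
    by_cases hx : x ∈ W
    · obtain ⟨t, -, ht⟩ := hη.exists_isBurningTime
      rw [toCut_of_mem _ hx, (cut_bridge hsymm hη.1 ht hx hxs).2]
    · rw [toCut_of_notMem _ hx, ofCut_of_notMem _ hx hxs, Nat.add_sub_cancel]

theorem card_recurrent_eqOn (hmin : G.Minimal W ξ) :
    Nat.card {η : α → ℕ // η G.sink = 0 ∧ G.Recurrent η ∧ EqOn η ξ W}
      = Nat.card {η : α → ℕ // η T.cut.sink = 0 ∧ T.cut.Recurrent η} :=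
  Nat.card_congr {
    toFun η := ⟨T.toCut η, by rw [toCut_of_notMem _ hW, η.2.1, Nat.zero_sub],
      (T.recurrent_toCut hW hmin η.2.2.1 η.2.2.2).1⟩
    invFun η := ⟨T.ofCut η, T.ofCut_sink, T.recurrent_ofCut hsymm hW hmin η.2.2,
      fun _ hx => T.ofCut_of_mem hx (ne_of_mem_of_not_mem hx hW)⟩
    left_inv η := Subtype.ext (T.ofCut_toCut hW hmin η.2.1 η.2.2.1 η.2.2.2)
    right_inv η := Subtype.ext (T.toCut_ofCut hsymm hW η.2.1 η.2.2) }

end Bijection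

end BurningForest

end Graph

end Sandpile

/-- The probability of a generalized minimal configuration is a
determinant of the matrix `K_G` over a set of edges touching `W` (the complement of
`W` is now allowed to be disconnected). -/
theorem statement_2 {α : Type*} [Fintype α] [DecidableEq α] (G : Sandpile.Graph α)
    (hG : G.IsSandpileGraph) (W : Finset α) (hWne : W.Nonempty) (hWs : G.sink ∉ W)
    (ξ : α → ℕ) (hstable : ∀ x ∈ W, ξ x < G.deg x) (hmin : G.Minimal W ξ) :
    ∃ 𝓔 : Finset G.OEdge,
      (∀ e ∈ 𝓔, e.1.1 ∈ W ∨ e.1.2.1 ∈ W) ∧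
      G.prob (fun η => Graph.EqOn η ξ W) =
        Matrix.det (Matrix.of fun e f : ↥𝓔 => G.Kmat e f) := by
  have hsymm := hG.1
  obtain ⟨T⟩ := hmin.exists_burningForest hsymm hG.2.1 hWs
  refine ⟨T.cutEdges, fun e he => .inl (Graph.BurningForest.mem_cutEdges.1 he).1.1, ?_⟩
  have hcut := T.cut_isSandpileGraph hsymm hWs hG.2.1 hmin
  have hdet := Graph.det_lapRed_deleteEdges hG (T.numEdges_cutEdges_add_le hsymm)
  calc G.prob (fun η => Graph.EqOn η ξ W)
      = T.cut.lapRed.det / G.lapRed.det := by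
        rw [Graph.prob, T.card_recurrent_eqOn hsymm hWs hmin, Graph.card_recurrent hcut,
          Graph.card_recurrent hG]
    _ = Matrix.det (Matrix.of fun e f : ↥T.cutEdges => G.Kmat e f) := by
        rw [hdet, mul_div_cancel_left₀ _ (Graph.det_lapRed_pos hG).ne']
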